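/- Let f be holomorphic on an open neighborhood of 0 in ℂ with f(0) = 0 and f'(0) = 1, and suppose (3 − f(z))·(2 − f(z))·f(z/3) = 2·f(z) for all z in a neighborhood of 0. Let κ_N := f^{(N)}(0)/N!. Then for every N ≥ 2: (2 − 2·3^{1−N})·κ_N = −5·∑_{j=1}^{N−1} 3^{−j}·κ_j·κ_{N−j} + ∑_{j=1}^{N−2} 3^{−j}·κ_j·∑_{k=1}^{N−j−1} κ_k·κ_{N−j−k}, where the second (double) sum is empty for N = 2. -/

import Mathlib

open Filter Topology

/-!
Passing to Taylor series at `0` turns the functional equation into the identity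
`(3 - F) (2 - F) F(X / 3) = 2 F` of formal power series, that is,
`2 F - 6 F(X / 3) = -5 F(X / 3) F + F(X / 3) F²`. Since `F` has no constant term, reading off the
coefficient of `X ^ N` gives the recurrence.
-/

open Finset PowerSeries
open scoped ContDiff

section FormalPowerSeries

variable {R : Type*}

theorem coeff_mul_eq_sum_Icc_of_constantCoeff_eq_zero [Semiring R] {F G : R⟦X⟧}
    (hF : constantCoeff F = 0) (hG : constantCoeff G = 0) (n : ℕ) :
    coeff n (F * G) = ∑ j ∈ Icc 1 (n - 1), coeff j F * coeff (n - j) G := by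
  rw [coeff_mul, Nat.sum_antidiagonal_eq_sum_range_succ fun i j => coeff i F * coeff j G]
  refine (sum_subset (fun j hj => ?_) fun j hj hj' => ?_).symm
  · simp only [mem_Icc, mem_range] at *
    omega
  · simp only [mem_Icc, mem_range] at *
    obtain rfl | rfl : j = 0 ∨ j = n := by omega
    · simp [hF]
    · simp [hG]

theorem coeff_mul_mul_eq_sum_Icc_of_constantCoeff_eq_zero [Semiring R] {F G H : R⟦X⟧}
    (hF : constantCoeff F = 0) (hG : constantCoeff G = 0) (hH : constantCoeff H = 0) (n : ℕ) :
    coeff n (F * (G * H)) =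
      ∑ j ∈ Icc 1 (n - 2), coeff j F *
        ∑ k ∈ Icc 1 (n - j - 1), coeff k G * coeff (n - j - k) H := by
  have hGH : constantCoeff (G * H) = 0 := by rw [map_mul, hG, zero_mul]
  simp only [coeff_mul_eq_sum_Icc_of_constantCoeff_eq_zero hF hGH,
    coeff_mul_eq_sum_Icc_of_constantCoeff_eq_zero hG hH]
  refine (sum_subset (Icc_subset_Icc_right (by omega)) fun j hj hj' => ?_).symm
  have hempty : Icc 1 (n - j - 1) = ∅ := by
    simp only [mem_Icc] at hj hj'
    exact Icc_eq_empty (by omega)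
  rw [hempty, sum_empty, mul_zero]

theorem coeff_recurrence_of_mul_rescale_eq [CommRing R] {a b d r : R} {F : R⟦X⟧}
    (hF : constantCoeff F = 0) (hFE : (C a - F) * (C b - F) * rescale r F = C d * F) (n : ℕ) :
    (d - a * b * r ^ n) * coeff n F =
      -(a + b) * ∑ j ∈ Icc 1 (n - 1), r ^ j * coeff j F * coeff (n - j) F +
      ∑ j ∈ Icc 1 (n - 2), r ^ j * coeff j F *
        ∑ k ∈ Icc 1 (n - j - 1), coeff k F * coeff (n - j - k) F := by
  have hrF : constantCoeff (rescale r F) = 0 := by simp [← coeff_zero_eq_constantCoeff_apply, hF]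
  have hexpand : C d * F - C (a * b) * rescale r F =
      C (-(a + b)) * (rescale r F * F) + rescale r F * (F * F) := by
    simp only [← hFE, map_mul, map_neg, map_add]
    ring
  have hcoeff := congrArg (coeff n) hexpand
  simp only [map_sub, map_add (coeff n), coeff_C_mul,
    coeff_mul_eq_sum_Icc_of_constantCoeff_eq_zero hrF hF,
    coeff_mul_mul_eq_sum_Icc_of_constantCoeff_eq_zero hrF hF hF, coeff_rescale] at hcoeff
  rw [← hcoeff]
  ring

end FormalPowerSeries

section TaylorSeries

variable {𝕜 : Type*} [NontriviallyNormedField 𝕜]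

/-- The Taylor series of `f` at `x`, as a formal power series in the increment; it need
not converge, and in positive characteristic its coefficients with `n! = 0` are `0`. -/
noncomputable def taylorSeries (f : 𝕜 → 𝕜) (x : 𝕜) : 𝕜⟦X⟧ :=
  PowerSeries.mk fun n => iteratedDeriv n f x / (n.factorial : 𝕜)

theorem coeff_taylorSeries (f : 𝕜 → 𝕜) (x : 𝕜) (n : ℕ) :
    coeff n (taylorSeries f x) = iteratedDeriv n f x / (n.factorial : 𝕜) :=
  coeff_mk _ _

theorem constantCoeff_taylorSeries (f : 𝕜 → 𝕜) (x : 𝕜) :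
    constantCoeff (taylorSeries f x) = f x := by
  simp [← coeff_zero_eq_constantCoeff_apply, coeff_taylorSeries]

theorem taylorSeries_congr {f g : 𝕜 → 𝕜} {x : 𝕜} (hfg : f =ᶠ[𝓝 x] g) :
    taylorSeries f x = taylorSeries g x := by
  ext n
  rw [coeff_taylorSeries, coeff_taylorSeries, hfg.iteratedDeriv_eq n]

theorem taylorSeries_const_sub (c : 𝕜) (f : 𝕜 → 𝕜) (x : 𝕜) :
    taylorSeries (fun z => c - f z) x = C c - taylorSeries f x := by
  ext n
  rcases n.eq_zero_or_pos with rfl | hn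
  · simp [constantCoeff_taylorSeries]
  · simp [coeff_taylorSeries, iteratedDeriv_const_sub hn, coeff_C, hn.ne', neg_div]

theorem taylorSeries_const_mul (c : 𝕜) (f : 𝕜 → 𝕜) (x : 𝕜) :
    taylorSeries (fun z => c * f z) x = C c * taylorSeries f x := by
  ext n
  rw [coeff_C_mul, coeff_taylorSeries, coeff_taylorSeries, iteratedDeriv_const_mul_field,
    mul_div_assoc]

theorem taylorSeries_mul [CharZero 𝕜] {f g : 𝕜 → 𝕜} {x : 𝕜} (hf : ContDiffAt 𝕜 ∞ f x)
    (hg : ContDiffAt 𝕜 ∞ g x) :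
    taylorSeries (fun z => f z * g z) x = taylorSeries f x * taylorSeries g x := by
  ext n
  have hn : (n : WithTop ℕ∞) ≤ ∞ := mod_cast le_top
  rw [coeff_mul, Nat.sum_antidiagonal_eq_sum_range_succ fun i j =>
      coeff i (taylorSeries f x) * coeff j (taylorSeries g x),
    coeff_taylorSeries, iteratedDeriv_fun_mul (hf.of_le hn) (hg.of_le hn), sum_div]
  refine sum_congr rfl fun i hi => ?_
  have hn0 : (n.factorial : 𝕜) ≠ 0 := Nat.cast_ne_zero.mpr n.factorial_ne_zero
  rw [coeff_taylorSeries, coeff_taylorSeries, Nat.cast_choose 𝕜 (mem_range_succ_iff.mp hi)]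
  field_simp

theorem iteratedDeriv_comp_mul_left {E : Type*} [NormedAddCommGroup E] [NormedSpace 𝕜 E] (c : 𝕜)
    (f : 𝕜 → E) (n : ℕ) :
    iteratedDeriv n (fun z => f (c * z)) = fun z => c ^ n • iteratedDeriv n f (c * z) := by
  induction n with
  | zero => simp
  | succ n ih =>
    funext z
    rw [iteratedDeriv_succ, ih, deriv_fun_const_smul_field, deriv_comp_mul_left,
      iteratedDeriv_succ, smul_smul, pow_succ]

theorem taylorSeries_comp_mul_left (c : 𝕜) (f : 𝕜 → 𝕜) (x : 𝕜) :
    taylorSeries (fun z => f (c * z)) x = rescale c (taylorSeries f (c * x)) := by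
  ext n
  simp only [coeff_rescale, coeff_taylorSeries, iteratedDeriv_comp_mul_left, smul_eq_mul,
    mul_div_assoc]

theorem taylorSeries_mul_rescale_eq [CharZero 𝕜] {a b d r : 𝕜} {f : 𝕜 → 𝕜}
    (hf : ContDiffAt 𝕜 ∞ f 0)
    (hFE : ∀ᶠ z in 𝓝 0, (a - f z) * (b - f z) * f (r * z) = d * f z) :
    (C a - taylorSeries f 0) * (C b - taylorSeries f 0) * rescale r (taylorSeries f 0) =
      C d * taylorSeries f 0 := by
  have hfr : ContDiffAt 𝕜 ∞ (fun z => f (r * z)) 0 :=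
    ContDiffAt.comp 0 (g := f) (by simpa using hf) (by fun_prop)
  have ha : ContDiffAt 𝕜 ∞ (fun z => a - f z) 0 := contDiffAt_const.sub hf
  have hb : ContDiffAt 𝕜 ∞ (fun z => b - f z) 0 := contDiffAt_const.sub hf
  have hT := taylorSeries_congr hFE
  rwa [taylorSeries_mul (ha.mul hb) hfr, taylorSeries_mul ha hb, taylorSeries_const_sub,
    taylorSeries_const_sub, taylorSeries_comp_mul_left, mul_zero, taylorSeries_const_mul] at hT

end TaylorSeries

theorem stmt17_general {𝕜 : Type*} [NontriviallyNormedField 𝕜] [CharZero 𝕜] {a b d r : 𝕜}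
    {f : 𝕜 → 𝕜} (hf : ContDiffAt 𝕜 ∞ f 0) (hf0 : f 0 = 0)
    (hFE : ∀ᶠ z in 𝓝 0, (a - f z) * (b - f z) * f (r * z) = d * f z)
    {κ : ℕ → 𝕜} (hκ : ∀ N : ℕ, κ N = iteratedDeriv N f 0 / (N.factorial : 𝕜)) (N : ℕ) :
    (d - a * b * r ^ N) * κ N =
      -(a + b) * ∑ j ∈ Icc 1 (N - 1), r ^ j * κ j * κ (N - j) +
      ∑ j ∈ Icc 1 (N - 2), r ^ j * κ j * ∑ k ∈ Icc 1 (N - j - 1), κ k * κ (N - j - k) := by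
  have hF : constantCoeff (taylorSeries f 0) = 0 := by rw [constantCoeff_taylorSeries, hf0]
  simpa only [coeff_taylorSeries, ← hκ] using
    coeff_recurrence_of_mul_rescale_eq hF (taylorSeries_mul_rescale_eq hf hFE) N

/-- Recurrence (51) for the Taylor coefficients of `f = Φ⁻¹`, the inverse Schröder
linearizer for `G(z) = 2z/((3−z)(2−z))`: the functional equation
`(3 − f(z))(2 − f(z))·f(z/3) = 2f(z)` yields, for `N ≥ 2`,
`(2 − 2·3^{1−N})κ_N = −5∑_{j=1}^{N−1} 3^{−j} κ_j κ_{N−j}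
  + ∑_{j=1}^{N−2} 3^{−j} κ_j ∑_{k=1}^{N−j−1} κ_k κ_{N−j−k}`. -/
theorem stmt17 (f : ℂ → ℂ) (hf : AnalyticAt ℂ f 0) (hf0 : f 0 = 0)
    (hf'0 : deriv f 0 = 1)
    (hFE : ∀ᶠ z in 𝓝 (0 : ℂ), (3 - f z) * (2 - f z) * f (z / 3) = 2 * f z)
    (κ : ℕ → ℂ) (hκ : ∀ N : ℕ, κ N = iteratedDeriv N f 0 / (N.factorial : ℂ)) :
    ∀ N : ℕ, 2 ≤ N →
      (2 - 2 * (3 : ℂ) ^ (1 - (N : ℤ))) * κ N =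
        -5 * ∑ j ∈ Finset.Icc 1 (N - 1), (3 : ℂ) ^ (-(j : ℤ)) * κ j * κ (N - j) +
        ∑ j ∈ Finset.Icc 1 (N - 2), (3 : ℂ) ^ (-(j : ℤ)) * κ j *
          ∑ k ∈ Finset.Icc 1 (N - j - 1), κ k * κ (N - j - k) := by
  intro N _
  have hrec := stmt17_general hf.contDiffAt hf0 (by simpa only [div_eq_inv_mul] using hFE) hκ N
  have hpow : 2 * (3 : ℂ) ^ (1 - (N : ℤ)) = 3 * 2 * 3⁻¹ ^ N := by
    rw [zpow_sub₀ three_ne_zero, zpow_one, zpow_natCast, inv_pow]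
    ring
  norm_num only [hpow, zpow_neg, zpow_natCast, ← inv_pow] at hrec ⊢
  exact hrec
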